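/- arXiv:2604.02679 — 4 statements merged into one kernel-verified Lean document; each statement's English description precedes it below -/
import Mathlib

section
/- Let H be an r×r Hermitian positive definite complex matrix, m ≥ 1 an integer, κ the largest eigenvalue of H, and suppose κ ≥ 1. Let v ∈ ℂ^r be a unit eigenvector of H with Hv = κv. Then H^{m−1} − H^m ≤ I + (κ^{m−1} − κ^m)·v·vᴴ in the Loewner order. -/
/-!
Write `P = v vᴴ`, `Q = 1 - P`, `n = m - 1`. Two observations give the estimate.

* `M = 1 - (H^n - H^(n+1))` is positive semidefinite, because of the polynomial identity
  `1 - t^n + t^(n+1) = t + ∑_{i<n} (1 - t) t^i (1 - t)`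
  (`posSemidef_one_sub_pow_sub_pow`); no diagonalization is needed.
* `v` is an eigenvector of the Hermitian matrix `M` for the eigenvalue `1 - (κ^n - κ^(n+1))`, so
  `M` commutes with the projection `P` and `M + (κ^n - κ^(n+1)) P = Q M Q + P`, a sum of two
  positive semidefinite matrices.
-/

open Matrix ComplexOrder

theorem posSemidef_one_sub_pow_sub_pow {r : ℕ} {H : Matrix (Fin r) (Fin r) ℂ}
    (hH : H.PosSemidef) (n : ℕ) : (1 - (H ^ n - H ^ (n + 1))).PosSemidef := by
  induction n with
  | zero => simpa using hH
  | succ n ih =>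
    have h1 : (1 - H).IsHermitian := isHermitian_one.sub hH.isHermitian
    have h2 := (hH.pow n).conjTranspose_mul_mul_same (1 - H)
    rw [h1.eq] at h2
    have key : 1 - (H ^ (n + 1) - H ^ (n + 1 + 1))
        = (1 - (H ^ n - H ^ (n + 1))) + (1 - H) * H ^ n * (1 - H) := by
      have hc : H * H ^ n = H ^ n * H := (pow_succ' H n).symm.trans (pow_succ H n)
      simp only [pow_succ, sub_mul, mul_sub, one_mul, mul_one, hc]
      abel
    rw [key]
    exact ih.add h2

theorem pow_mulVec_of_mulVec_eq_smul {r : ℕ} {H : Matrix (Fin r) (Fin r) ℂ} {c : ℂ}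
    {v : Fin r → ℂ} (h : H *ᵥ v = c • v) (n : ℕ) : (H ^ n) *ᵥ v = c ^ n • v := by
  induction n with
  | zero => simp
  | succ n ih => rw [pow_succ, ← mulVec_mulVec, h, mulVec_smul, ih, smul_smul, pow_succ']

/-- Changing the eigenvalue `c` of a positive semidefinite matrix along the unit eigenvector `v`
to `1` keeps the matrix positive semidefinite. -/
theorem posSemidef_add_smul_proj {r : ℕ} {M : Matrix (Fin r) (Fin r) ℂ}
    (hM : M.PosSemidef) {c : ℝ} {v : Fin r → ℂ} (hv : star v ⬝ᵥ v = 1)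
    (h : M *ᵥ v = (c : ℂ) • v) :
    (M + (1 - (c : ℂ)) • vecMulVec v (star v)).PosSemidef := by
  have hP : (vecMulVec v (star v)).PosSemidef := posSemidef_vecMulVec_self_star v
  set P := vecMulVec v (star v) with hPdef
  have hPP : P * P = P := by
    rw [hPdef, vecMulVec_mul_vecMulVec, hv, one_smul]
  have hMP : M * P = (c : ℂ) • P := by
    rw [hPdef, mul_vecMulVec, h, smul_vecMulVec]
  have hPM : P * M = (c : ℂ) • P := by
    have := congrArg conjTranspose hMP
    simpa [conjTranspose_mul, hM.isHermitian.eq, hP.isHermitian.eq] using this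
  have h2 := hM.conjTranspose_mul_mul_same (1 - P)
  rw [(isHermitian_one.sub hP.isHermitian).eq] at h2
  have key : M + (1 - (c : ℂ)) • P = (1 - P) * M * (1 - P) + P := by
    simp only [sub_mul, mul_sub, one_mul, mul_one, hMP, hPM, smul_mul_assoc, hPP, sub_smul,
      one_smul]
    abel
  rw [key]
  exact h2.add hP

/-- Refined spectral estimate in Theorem 3.1: if `H` is Hermitian positive definite,
`κ ≥ 1` is its largest eigenvalue (encoded by `H ≤ κ·Id` and `H v = κ v` for a unit
vector `v`), then `H^{m-1} - H^m ≤ Id + (κ^{m-1} - κ^m)·v·vᴴ` in the Loewner order. -/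
theorem pow_sub_pow_le_one_add_proj {r : ℕ} (H : Matrix (Fin r) (Fin r) ℂ)
    (hH : H.PosDef) (m : ℕ) (hm : 1 ≤ m) (κ : ℝ) (hκ : 1 ≤ κ)
    (v : Fin r → ℂ) (hv : star v ⬝ᵥ v = 1)
    (hev : H *ᵥ v = (κ : ℂ) • v)
    (hmax : ((κ : ℂ) • (1 : Matrix (Fin r) (Fin r) ℂ) - H).PosSemidef) :
    ((1 : Matrix (Fin r) (Fin r) ℂ)
      + ((κ ^ (m - 1) - κ ^ m : ℝ) : ℂ) • vecMulVec v (star v)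
      - (H ^ (m - 1) - H ^ m)).PosSemidef := by
  obtain ⟨n, rfl⟩ : ∃ n, m = n + 1 := ⟨m - 1, by omega⟩
  rw [Nat.add_sub_cancel]
  have hM := posSemidef_one_sub_pow_sub_pow hH.posSemidef n
  have hMv : (1 - (H ^ n - H ^ (n + 1))) *ᵥ v
      = ((1 - (κ ^ n - κ ^ (n + 1)) : ℝ) : ℂ) • v := by
    simp only [sub_mulVec, one_mulVec, pow_mulVec_of_mulVec_eq_smul hev]
    push_cast
    simp only [sub_smul, one_smul]
  have := posSemidef_add_smul_proj hM hv hMv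
  convert this using 1
  push_cast
  rw [sub_sub_cancel]
  abel
end

section
/- Let Ω and H be r×r Hermitian complex matrices with H positive definite, and suppose k₀·I ≤ Ω ≤ K·I in the Loewner order for reals K and k₀ ≥ 0. Let κ be the largest eigenvalue of H and suppose κ ≥ 1. Then for every integer m ≥ 1, tr(Ω·(H^{m−1} − H^m)) ≤ r·K + k₀·(κ^{m−1} − κ^m). -/
open Matrix ComplexOrder

/-!
Diagonalise `H` by a unitary `U`, with eigenvalues `λ i > 0`, and put `d i = Re (Uᴴ Ω U) i i`. Then
`Re tr (Ω (H^(m-1) - H^m)) = ∑ i, d i * (λ i ^ (m-1) - λ i ^ m)`, and `k₀ ≤ d i ≤ K` because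
conjugation by `U` preserves the Loewner bounds on `Ω`. Every summand is at most `K`, since
`x^(m-1) - x^m` is at most `1` for `0 < x` and is nonpositive for `x ≥ 1`. At an index with
`λ i = κ ≥ 1` the factor is nonpositive, so that summand is at most `k₀ (κ^(m-1) - κ^m)`; the
remaining `r - 1` summands contribute at most `(r - 1) K ≤ r K`, as `K ≥ k₀ ≥ 0`.
-/

/-- The pairing of `Ω` with a power of `H`, computed in an orthonormal eigenbasis of `H`. -/
lemma trace_mul_pow_eq_sum {r : ℕ} (Ω H : Matrix (Fin r) (Fin r) ℂ) (hH : H.IsHermitian) (j : ℕ) :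
    (Ω * H ^ j).trace.re = ∑ i, (((hH.eigenvectorUnitary : Matrix (Fin r) (Fin r) ℂ)ᴴ * Ω *
      (hH.eigenvectorUnitary : Matrix (Fin r) (Fin r) ℂ)) i i).re * hH.eigenvalues i ^ j := by
  have hpow : H ^ j = (hH.eigenvectorUnitary : Matrix (Fin r) (Fin r) ℂ) *
      diagonal (fun i => ((hH.eigenvalues i ^ j : ℝ) : ℂ)) *
      (hH.eigenvectorUnitary : Matrix (Fin r) (Fin r) ℂ)ᴴ := by
    conv_lhs => rw [hH.spectral_theorem, ← map_pow, diagonal_pow,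
      Unitary.conjStarAlgAut_apply]
    rw [← star_eq_conjTranspose]
    congr 3
    ext i
    simp
  rw [hpow, ← mul_assoc, trace_mul_comm, ← mul_assoc, ← mul_assoc]
  simp [trace, mul_diagonal, Complex.re_sum, -Complex.ofReal_pow]

/-- Congruence by any `U` preserves the Loewner order, hence the order of the diagonal entries. -/
lemma le_re_conj_diag {r : ℕ} (A B U : Matrix (Fin r) (Fin r) ℂ) (h : (A - B).PosSemidef)
    (i : Fin r) : ((Uᴴ * B * U) i i).re ≤ ((Uᴴ * A * U) i i).re := by
  have h1 := (h.conjTranspose_mul_mul_same U).diag_nonneg (i := i)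
  have h2 := (Complex.le_def.1 h1).1
  rw [mul_sub, sub_mul] at h2
  simpa using h2

lemma mul_pow_sub_pow_le {K d x : ℝ} (hd : 0 ≤ d) (hdK : d ≤ K) (hx : 0 < x) (n : ℕ) :
    d * (x ^ n - x ^ (n + 1)) ≤ K := by
  have hx1 : x ^ n - x ^ (n + 1) ≤ 1 := by
    rcases le_total x 1 with h | h
    · have := pow_le_one₀ hx.le h (n := n)
      have : 0 ≤ x ^ (n + 1) := by positivity
      linarith
    · have : x ^ n ≤ x ^ (n + 1) := pow_le_pow_right₀ h n.le_succ
      linarith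
  nlinarith

/-- Claim (2) in the proof of Theorem 3.1: if `k₀·Id ≤ Ω ≤ K·Id` in the Loewner order
with `k₀ ≥ 0`, `H` is Hermitian positive definite and its largest eigenvalue `κ`
(encoded by `H ≤ κ·Id` together with `κ` being an eigenvalue) satisfies `κ ≥ 1`, then
for every `m ≥ 1`, `tr (Ω·(H^{m-1} - H^m)) ≤ r·K + k₀·(κ^{m-1} - κ^m)`. -/
theorem trace_pairing_refined_upper_bound {r : ℕ} (Ω H : Matrix (Fin r) (Fin r) ℂ)
    (hΩ : Ω.IsHermitian) (hH : H.PosDef) (K k₀ : ℝ) (hk₀ : 0 ≤ k₀)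
    (hlow : (Ω - (k₀ : ℂ) • (1 : Matrix (Fin r) (Fin r) ℂ)).PosSemidef)
    (hup : ((K : ℂ) • (1 : Matrix (Fin r) (Fin r) ℂ) - Ω).PosSemidef)
    (κ : ℝ) (hκ : 1 ≤ κ)
    (hmax : ((κ : ℂ) • (1 : Matrix (Fin r) (Fin r) ℂ) - H).PosSemidef)
    (hev : ∃ v : Fin r → ℂ, v ≠ 0 ∧ H *ᵥ v = (κ : ℂ) • v)
    (m : ℕ) (hm : 1 ≤ m) :
    (Ω * (H ^ (m - 1) - H ^ m)).trace.re ≤ r * K + k₀ * (κ ^ (m - 1) - κ ^ m) := by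
  obtain ⟨n, rfl⟩ : ∃ n, m = n + 1 := ⟨m - 1, by omega⟩
  rw [Nat.add_sub_cancel]
  have hHh := hH.isHermitian
  set U : Matrix (Fin r) (Fin r) ℂ := hHh.eigenvectorUnitary.1 with hU
  set d : Fin r → ℝ := fun i => ((Uᴴ * Ω * U) i i).re with hd
  have hUU : Uᴴ * U = 1 := Unitary.coe_star_mul_self hHh.eigenvectorUnitary
  have hdlow : ∀ i, k₀ ≤ d i := fun i => by
    simpa [hUU] using le_re_conj_diag _ _ U hlow i
  have hdup : ∀ i, d i ≤ K := fun i => by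
    simpa [hUU] using le_re_conj_diag _ _ U hup i
  have hpos : ∀ i, 0 < hHh.eigenvalues i := hH.eigenvalues_pos
  obtain ⟨i₀, hi₀⟩ : ∃ i, hHh.eigenvalues i = κ := by
    obtain ⟨v, hv0, hv⟩ := hev
    have hmem : κ ∈ spectrum ℝ H := by
      rw [← spectrum.algebraMap_mem_iff ℂ, ← Matrix.spectrum_toLin']
      refine Module.End.HasEigenvalue.mem_spectrum
        (Module.End.hasEigenvalue_of_hasEigenvector (x := v) ⟨?_, hv0⟩)
      rw [Module.End.mem_eigenspace_iff]
      simpa using hv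
    rwa [hHh.spectrum_real_eq_range_eigenvalues] at hmem
  have hsum : (Ω * (H ^ n - H ^ (n + 1))).trace.re =
      ∑ i, d i * (hHh.eigenvalues i ^ n - hHh.eigenvalues i ^ (n + 1)) := by
    rw [mul_sub, trace_sub, Complex.sub_re, trace_mul_pow_eq_sum Ω H hHh,
      trace_mul_pow_eq_sum Ω H hHh, ← Finset.sum_sub_distrib]
    exact Finset.sum_congr rfl fun i _ => (mul_sub _ _ _).symm
  have hK : 0 ≤ K := hk₀.trans ((hdlow i₀).trans (hdup i₀))
  have hrest : ∑ i ∈ Finset.univ.erase i₀,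
      d i * (hHh.eigenvalues i ^ n - hHh.eigenvalues i ^ (n + 1)) ≤ r * K := by
    refine (Finset.sum_le_card_nsmul _ _ K fun i _ =>
      mul_pow_sub_pow_le (hk₀.trans (hdlow i)) (hdup i) (hpos i) n).trans ?_
    rw [nsmul_eq_mul]
    refine mul_le_mul_of_nonneg_right ?_ hK
    exact_mod_cast (Finset.card_le_univ _).trans_eq (Fintype.card_fin r)
  have hκn : κ ^ n - κ ^ (n + 1) ≤ 0 := sub_nonpos.2 (pow_le_pow_right₀ hκ n.le_succ)
  rw [hsum, ← Finset.sum_erase_add _ _ (Finset.mem_univ i₀), hi₀]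
  exact add_le_add hrest (mul_le_mul_of_nonpos_right (hdlow i₀) hκn)
end

section
/- Let m ≥ 1 and 0 ≤ p ≤ m−1 be integers, let H be an r×r Hermitian positive definite complex matrix, let X be an arbitrary r×r complex matrix, and let t ∈ ℂ. Then Re tr(X·H^{m−2−p}·Xᴴ·H^p) + (|t|²/(4m²))·Re tr(H^m) ≥ −(1/m)·Re( conj(t)·tr(X·H^{m−1}) ), where for p = m−1 the power H^{m−2−p} means H⁻¹ (i.e. integer powers of the invertible matrix H are used). -/
/-!
Put `c = t / (2m)` and `Y = X + c • H`. For positive semidefinite `P`, `Q` the trace of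
`Y * Q * Yᴴ * P` has nonnegative real part (`re_trace_nonneg`), and the inequality is this fact for
`P = H ^ p`, `Q = H ^ (m - 2 - p)`. Indeed, expanding the trace and using that powers of `H` commute
and that the trace is cyclic gives the left-hand side plus the cross term
`conj c * tr (X * H ^ (m - 1))` and its conjugate, whose real parts add up to minus the right-hand side.
-/

open Matrix ComplexOrder

open scoped MatrixOrder in
/-- Factoring `P = Bᴴ * B`, the trace equals that of the positive semidefinite matrix
`(B * Y) * Q * (B * Y)ᴴ`. -/
theorem re_trace_nonneg {r : ℕ} {P Q : Matrix (Fin r) (Fin r) ℂ} (hP : P.PosSemidef)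
    (hQ : Q.PosSemidef) (Y : Matrix (Fin r) (Fin r) ℂ) :
    0 ≤ (Y * Q * Yᴴ * P).trace.re := by
  obtain ⟨B, rfl⟩ := CStarAlgebra.nonneg_iff_eq_star_mul_self.mp hP.nonneg
  rw [star_eq_conjTranspose]
  have h := (hQ.mul_mul_conjTranspose_same (B * Y)).trace_nonneg
  have e : (Y * Q * Yᴴ * (Bᴴ * B)).trace = (B * Y * Q * (B * Y)ᴴ).trace := by
    rw [← Matrix.mul_assoc, Matrix.trace_mul_comm, conjTranspose_mul]
    simp only [Matrix.mul_assoc]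
  rw [e]
  exact (Complex.le_def.mp h).1

/-- The pointwise matrix inequality underlying estimate (3.13) in the proof of
Theorem 3.1: for `0 ≤ p ≤ m-1`, a Hermitian positive definite `H`, an arbitrary
matrix `X` and a scalar `t`,
`Re tr(X·H^{m-2-p}·Xᴴ·H^p) + (|t|²/(4m²))·Re tr(H^m) ≥ -(1/m)·Re(conj t · tr(X·H^{m-1}))`,
where integer powers of the invertible matrix `H` are used. -/
theorem torsion_matrix_inequality {r : ℕ} (m p : ℕ) (hm : 1 ≤ m) (hp : p ≤ m - 1)
    (H : Matrix (Fin r) (Fin r) ℂ) (hH : H.PosDef)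
    (X : Matrix (Fin r) (Fin r) ℂ) (t : ℂ) :
    (X * H ^ ((m : ℤ) - 2 - (p : ℤ)) * Xᴴ * H ^ (p : ℤ)).trace.re
        + ‖t‖ ^ 2 / (4 * (m : ℝ) ^ 2) * (H ^ (m : ℤ)).trace.re
      ≥ -(1 / (m : ℝ)) * ((starRingEnd ℂ) t * (X * H ^ ((m : ℤ) - 1)).trace).re := by
  have hu : IsUnit H.det := (Matrix.isUnit_iff_isUnit_det H).mp hH.isUnit
  have hm0 : (m : ℝ) ≠ 0 := by positivity
  set q : ℤ := (m : ℤ) - 2 - p with hq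
  set c : ℂ := ((1 / (2 * (m : ℝ)) : ℝ) : ℂ) * t with hc
  have hherm : ∀ k : ℤ, (H ^ k)ᴴ = H ^ k := fun k => by
    rw [conjTranspose_zpow, hH.isHermitian.eq]
  have key := re_trace_nonneg (hH.posSemidef.zpow (p : ℤ)) (hH.posSemidef.zpow q) (X + c • H)
  have mul_pow : ∀ i j : ℤ, H ^ i * H ^ j = H ^ (i + j) := fun i j => (zpow_add hu i j).symm
  have h1 : (X * H ^ q * H * H ^ (p : ℤ)).trace = (X * H ^ ((m : ℤ) - 1)).trace := by
    have : H ^ q * (H * H ^ (p : ℤ)) = H ^ ((m : ℤ) - 1) := by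
      rw [← zpow_one_add hu, mul_pow]; congr 1; omega
    rw [Matrix.mul_assoc, Matrix.mul_assoc, this]
  have h2 : (H * H ^ q * Xᴴ * H ^ (p : ℤ)).trace
      = (starRingEnd ℂ) (X * H ^ ((m : ℤ) - 1)).trace := by
    have : H ^ (p : ℤ) * (H * H ^ q) = H ^ ((m : ℤ) - 1) := by
      rw [← zpow_one_add hu, mul_pow]; congr 1; omega
    rw [Matrix.trace_mul_comm, ← Matrix.mul_assoc, this, starRingEnd_apply, ← trace_conjTranspose,
      conjTranspose_mul, hherm]
  have h3 : H * H ^ q * H * H ^ (p : ℤ) = H ^ (m : ℤ) := by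
    rw [Matrix.mul_assoc, ← zpow_one_add hu, ← zpow_one_add hu, mul_pow]; congr 1; omega
  have expand : ((X + c • H) * H ^ q * (X + c • H)ᴴ * H ^ (p : ℤ)).trace
      = (X * H ^ q * Xᴴ * H ^ (p : ℤ)).trace
        + (starRingEnd ℂ) c * (X * H ^ ((m : ℤ) - 1)).trace
        + c * (starRingEnd ℂ) (X * H ^ ((m : ℤ) - 1)).trace
        + c * (starRingEnd ℂ) c * (H ^ (m : ℤ)).trace := by
    rw [← h2, ← h3, ← h1, conjTranspose_add, conjTranspose_smul,
      hH.isHermitian.eq]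
    simp only [Matrix.add_mul, Matrix.mul_add, Matrix.smul_mul, Matrix.mul_smul, trace_add,
      trace_smul, smul_eq_mul, starRingEnd_apply]
    ring
  rw [expand, Complex.mul_conj] at key
  generalize (X * H ^ ((m : ℤ) - 1)).trace = z at *
  have hn : Complex.normSq c = ‖t‖ ^ 2 / (4 * (m : ℝ) ^ 2) := by
    rw [hc, Complex.normSq_mul, Complex.normSq_ofReal, Complex.normSq_eq_norm_sq]
    field_simp
    ring
  have hcross : ((starRingEnd ℂ) c * z).re + (c * (starRingEnd ℂ) z).re
      = (1 / (m : ℝ)) * ((starRingEnd ℂ) t * z).re := by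
    rw [hc]
    simp only [map_mul, Complex.conj_ofReal, mul_assoc, Complex.re_ofReal_mul]
    simp only [Complex.mul_re, Complex.conj_re, Complex.conj_im]
    field_simp
    ring
  rw [Complex.add_re, Complex.add_re, Complex.add_re, Complex.re_ofReal_mul, hn] at key
  linarith
end

section
/- Let m ≥ 1 be an integer, H an r×r Hermitian positive definite complex matrix, X an arbitrary r×r complex matrix, and t ∈ ℂ. Then ∑_{p=0}^{m−1} Re tr(X·H^{m−2−p}·Xᴴ·H^p) + Re( conj(t)·tr(X·H^{m−1}) ) ≥ −(|t|²/(4m))·Re tr(H^m), where for p = m−1 the power H^{m−2−p} means H⁻¹ (i.e. integer powers of the invertible matrix H are used). -/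
/-!
Put `c = t / (2m)` and `Y = X + c H`. For each `p` the number `Re tr(Y H^{m-2-p} Yᴴ H^p)` is
nonnegative, being the trace of a product of two positive semidefinite matrices
(`trace_mul_re_nonneg`). By cyclicity of the trace it expands to
`Re tr(X H^{m-2-p} Xᴴ H^p) + 2 Re(c̄ tr(X H^{m-1})) + |c|² Re tr(H^m)`
(`trace_shift_expand`), where only the first term depends on `p`. Summing over the `m` values
of `p` gives the inequality, with `2mc = t` and `m|c|² = |t|²/(4m)`.
-/

open Matrix ComplexOrder Finset

lemma trace_mul_re_nonneg {r : ℕ} {P Q : Matrix (Fin r) (Fin r) ℂ}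
    (hP : P.PosSemidef) (hQ : Q.PosSemidef) : 0 ≤ (P * Q).trace.re := by
  obtain ⟨B, rfl⟩ : ∃ B : Matrix (Fin r) (Fin r) ℂ, Q = Bᴴ * B := by
    open scoped MatrixOrder in
    exact CStarAlgebra.nonneg_iff_eq_star_mul_self.mp hQ.nonneg
  have h : (P * (Bᴴ * B)).trace = (B * P * Bᴴ).trace := by
    rw [← Matrix.mul_assoc, Matrix.trace_mul_comm, ← Matrix.mul_assoc]
  rw [h]
  exact (Complex.nonneg_iff.mp (hP.mul_mul_conjTranspose_same B).trace_nonneg).1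

/-- The two cross terms in the expansion are complex conjugates of each other because `H` is
Hermitian; this is where the factor `2` comes from. -/
lemma trace_shift_expand {r : ℕ} {H : Matrix (Fin r) (Fin r) ℂ} (hH : H.PosDef)
    (X : Matrix (Fin r) (Fin r) ℂ) (c : ℂ) (a b : ℤ) :
    ((X + c • H) * H ^ a * (X + c • H)ᴴ * H ^ b).trace.re
      = (X * H ^ a * Xᴴ * H ^ b).trace.re
        + 2 * ((starRingEnd ℂ) c * (X * H ^ (a + b + 1)).trace).re
        + ‖c‖ ^ 2 * (H ^ (a + b + 2)).trace.re := by
  have hu : IsUnit H.det := (Matrix.isUnit_iff_isUnit_det H).mp hH.isUnit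
  have hXH : X * H ^ a * H * H ^ b = X * H ^ (a + b + 1) := by
    rw [show a + b + 1 = a + 1 + b by ring, zpow_add hu, zpow_add_one hu]
    simp only [Matrix.mul_assoc]
  have hHH : H * H ^ a * H * H ^ b = H ^ (a + b + 2) := by
    rw [show a + b + 2 = 1 + a + 1 + b by ring, zpow_add hu, zpow_add_one hu, zpow_add hu,
      zpow_one]
  have hHX : (H * H ^ a * Xᴴ * H ^ b).trace = star (X * H ^ (a + b + 1)).trace := by
    rw [← Matrix.trace_conjTranspose, Matrix.conjTranspose_mul, (hH.isHermitian.zpow _).eq,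
      Matrix.trace_mul_comm, show a + b + 1 = b + 1 + a by ring, zpow_add hu, zpow_add_one hu]
    simp only [Matrix.mul_assoc]
  have hc : (‖c‖ : ℝ) ^ 2 = c.re * c.re + c.im * c.im := by
    rw [← Complex.normSq_eq_norm_sq, Complex.normSq_apply]
  simp only [Matrix.conjTranspose_add, Matrix.conjTranspose_smul, hH.isHermitian.eq,
    Matrix.add_mul, Matrix.mul_add, Matrix.smul_mul, Matrix.mul_smul, Matrix.trace_add,
    Matrix.trace_smul, hXH, hHH, hHX, hc, smul_eq_mul]
  simp
  ring

/-- The summed torsion estimate in the proof of Theorem 3.1: for a Hermitian positive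
definite `H`, an arbitrary matrix `X` and a scalar `t`,
`∑_{p=0}^{m-1} Re tr(X·H^{m-2-p}·Xᴴ·H^p) + Re(conj t · tr(X·H^{m-1}))
  ≥ -(|t|²/(4m))·Re tr(H^m)`,
where integer powers of the invertible matrix `H` are used. -/
theorem torsion_matrix_inequality_sum {r : ℕ} (m : ℕ) (hm : 1 ≤ m)
    (H : Matrix (Fin r) (Fin r) ℂ) (hH : H.PosDef)
    (X : Matrix (Fin r) (Fin r) ℂ) (t : ℂ) :
    (∑ p ∈ Finset.range m,
        (X * H ^ ((m : ℤ) - 2 - (p : ℤ)) * Xᴴ * H ^ (p : ℤ)).trace.re)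
        + ((starRingEnd ℂ) t * (X * H ^ ((m : ℤ) - 1)).trace).re
      ≥ -(‖t‖ ^ 2 / (4 * (m : ℝ))) * (H ^ (m : ℤ)).trace.re := by
  have hm0 : (m : ℝ) ≠ 0 := by positivity
  obtain ⟨c, rfl⟩ : ∃ c : ℂ, t = ((2 * m : ℝ) : ℂ) * c :=
    ⟨t / ((2 * m : ℝ) : ℂ), by
      rw [mul_div_cancel₀]
      exact_mod_cast mul_ne_zero two_ne_zero hm0⟩
  have key : ∀ p ∈ Finset.range m,
      -(2 * ((starRingEnd ℂ) c * (X * H ^ ((m : ℤ) - 1)).trace).re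
          + ‖c‖ ^ 2 * (H ^ (m : ℤ)).trace.re)
        ≤ (X * H ^ ((m : ℤ) - 2 - (p : ℤ)) * Xᴴ * H ^ (p : ℤ)).trace.re := by
    intro p _
    have h := trace_mul_re_nonneg
      ((hH.posSemidef.zpow ((m : ℤ) - 2 - p)).mul_mul_conjTranspose_same (X + c • H))
      (hH.posSemidef.zpow (p : ℤ))
    rw [trace_shift_expand hH, show (m : ℤ) - 2 - p + p + 1 = m - 1 by ring,
      show (m : ℤ) - 2 - p + p + 2 = m by ring] at h
    linarith
  have hsum := Finset.sum_le_sum key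
  rw [Finset.sum_const, Finset.card_range, nsmul_eq_mul] at hsum
  have hcross : ((starRingEnd ℂ) (((2 * m : ℝ) : ℂ) * c) * (X * H ^ ((m : ℤ) - 1)).trace).re
      = 2 * m * ((starRingEnd ℂ) c * (X * H ^ ((m : ℤ) - 1)).trace).re := by
    rw [map_mul, Complex.conj_ofReal, mul_assoc, Complex.re_ofReal_mul]
  have hnorm : ‖((2 * m : ℝ) : ℂ) * c‖ ^ 2 / (4 * (m : ℝ)) = m * ‖c‖ ^ 2 := by
    rw [norm_mul, Complex.norm_real, mul_pow, Real.norm_eq_abs, sq_abs]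
    field_simp
    ring
  rw [hcross, hnorm]
  linarith
end
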